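/- Let B be a bialgebra over K. For all p, q ≥ 1 the vertical differentials satisfy δ_c^{p+1,q} ∘ δ_c^{p,q} = 0, where δ_c^{p,q} : Hom(B^{⊗q}, B^{⊗p}) → Hom(B^{⊗q}, B^{⊗p+1}) is given by δ_c^{p,q}(f) = (Id ⊗ f) ∘ σ^q + Σ_{j=1}^{p} (−1)^j Δ_j^p ∘ f + (−1)^{p+1} (f ⊗ Id) ∘ τ^q. -/

import Mathlib

open TensorProduct

namespace GBD

variable (K B : Type*) [Field K] [Ring B] [Bialgebra K B]

/-- The `n`-th tensor power `B^{⊗n}`. -/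
abbrev T (n : ℕ) := PiTensorProduct K (fun _ : Fin n => B)

/-- Splitting off the first tensor factor: `B^{⊗(n+1)} ≃ B ⊗ B^{⊗n}`. -/
noncomputable def split (n : ℕ) : T K B (n + 1) ≃ₗ[K] B ⊗[K] T K B n :=
  ((PiTensorProduct.reindex K (fun _ : Fin (n+1) => B)
      ((finCongr (Nat.add_comm 1 n)).symm.trans finSumFinEquiv.symm)).trans
    (PiTensorProduct.tmulEquiv K B).symm).trans
      (TensorProduct.congr (PiTensorProduct.subsingletonEquiv (0 : Fin 1))
        (LinearEquiv.refl K _))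

/-- Splitting off the last tensor factor: `B^{⊗(n+1)} ≃ B^{⊗n} ⊗ B`. -/
noncomputable def splitLast (n : ℕ) : T K B (n + 1) ≃ₗ[K] T K B n ⊗[K] B :=
  ((PiTensorProduct.reindex K (fun _ : Fin (n+1) => B) finSumFinEquiv.symm).trans
    (PiTensorProduct.tmulEquiv K B).symm).trans
      (TensorProduct.congr (LinearEquiv.refl K _)
        (PiTensorProduct.subsingletonEquiv (0 : Fin 1)))

/-- Iterated comultiplication `Δ^{(n)} : B → B^{⊗n}` (with `Δ^{(0)} = ε`, `Δ^{(1)} = Id`). -/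
noncomputable def iterComul : (n : ℕ) → (B →ₗ[K] T K B n)
  | 0 => (PiTensorProduct.isEmptyEquiv (Fin 0)).symm.toLinearMap ∘ₗ
      (Coalgebra.counit (R := K) (A := B))
  | (n + 1) => (split K B n).symm.toLinearMap ∘ₗ
      LinearMap.lTensor B (iterComul n) ∘ₗ (Coalgebra.comul (R := K) (A := B))

/-- Componentwise comultiplication `B^{⊗n} → B^{⊗n} ⊗ B^{⊗n}`,
`b¹⊗⋯⊗bⁿ ↦ (b¹₍₁₎⊗⋯⊗bⁿ₍₁₎) ⊗ (b¹₍₂₎⊗⋯⊗bⁿ₍₂₎)`. -/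
noncomputable def comulT : (n : ℕ) → (T K B n →ₗ[K] T K B n ⊗[K] T K B n)
  | 0 => (TensorProduct.congr (PiTensorProduct.isEmptyEquiv (Fin 0)).symm
        (PiTensorProduct.isEmptyEquiv (Fin 0)).symm).toLinearMap ∘ₗ
      (TensorProduct.lid K K).symm.toLinearMap ∘ₗ
        (PiTensorProduct.isEmptyEquiv (Fin 0)).toLinearMap
  | (n + 1) =>
      (TensorProduct.congr (split K B n).symm (split K B n).symm).toLinearMap ∘ₗ
        (TensorProduct.tensorTensorTensorComm K B B (T K B n) (T K B n)).toLinearMap ∘ₗ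
          TensorProduct.map (Coalgebra.comul (R := K) (A := B)) (comulT n) ∘ₗ
            (split K B n).toLinearMap

/-- The product of all tensor factors, `B^{⊗n} → B`, `b¹⊗⋯⊗bⁿ ↦ b¹⋯bⁿ`. -/
noncomputable def prodT (n : ℕ) : T K B n →ₗ[K] B :=
  PiTensorProduct.lift (MultilinearMap.mkPiAlgebraFin K n B)

/-- `μ_i : B^{⊗(q+1)} → B^{⊗q}` multiplying the `i`-th and `(i+1)`-th factors
(`i` is 0-indexed here). -/
noncomputable def mulAt : (q : ℕ) → ℕ → (T K B (q + 1) →ₗ[K] T K B q)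
  | 0, _ => 0
  | (q + 1), 0 => (split K B q).symm.toLinearMap ∘ₗ
      LinearMap.rTensor (T K B q) (LinearMap.mul' K B) ∘ₗ
        (TensorProduct.assoc K B B (T K B q)).symm.toLinearMap ∘ₗ
          LinearMap.lTensor B (split K B q).toLinearMap ∘ₗ
            (split K B (q + 1)).toLinearMap
  | (q + 1), (i + 1) => (split K B q).symm.toLinearMap ∘ₗ
      LinearMap.lTensor B (mulAt q i) ∘ₗ (split K B (q + 1)).toLinearMap

/-- `Δ_j : B^{⊗p} → B^{⊗(p+1)}` applying `Δ` to the `j`-th factor (`j` is 0-indexed). -/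
noncomputable def comulAt : (p : ℕ) → ℕ → (T K B p →ₗ[K] T K B (p + 1))
  | 0, _ => 0
  | (p + 1), 0 => (split K B (p + 1)).symm.toLinearMap ∘ₗ
      LinearMap.lTensor B (split K B p).symm.toLinearMap ∘ₗ
        (TensorProduct.assoc K B B (T K B p)).toLinearMap ∘ₗ
          LinearMap.rTensor (T K B p) (Coalgebra.comul (R := K) (A := B)) ∘ₗ
            (split K B p).toLinearMap
  | (p + 1), (i + 1) => (split K B (p + 1)).symm.toLinearMap ∘ₗ
      LinearMap.lTensor B (comulAt p i) ∘ₗ (split K B p).toLinearMap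

/-- `λ^p : B^{⊗(p+1)} → B^{⊗p}`, `b¹⊗b²⊗⋯⊗b^{p+1} ↦ b¹₍₁₎b² ⊗ ⋯ ⊗ b¹₍ₚ₎b^{p+1}`. -/
noncomputable def lamMap (p : ℕ) : T K B (p + 1) →ₗ[K] T K B p :=
  LinearMap.mul' K (T K B p) ∘ₗ TensorProduct.map (iterComul K B p) LinearMap.id ∘ₗ
    (split K B p).toLinearMap

/-- `ρ^p : B^{⊗(p+1)} → B^{⊗p}`, `b¹⊗⋯⊗b^p⊗b^{p+1} ↦ b¹b^{p+1}₍₁₎ ⊗ ⋯ ⊗ b^p b^{p+1}₍ₚ₎`. -/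
noncomputable def rhoMap (p : ℕ) : T K B (p + 1) →ₗ[K] T K B p :=
  LinearMap.mul' K (T K B p) ∘ₗ TensorProduct.map LinearMap.id (iterComul K B p) ∘ₗ
    (splitLast K B p).toLinearMap

/-- `σ^q : B^{⊗q} → B^{⊗(q+1)}`, `b¹⊗⋯⊗b^q ↦ (b¹₍₁₎⋯b^q₍₁₎) ⊗ b¹₍₂₎ ⊗ ⋯ ⊗ b^q₍₂₎`. -/
noncomputable def sigmaMap (q : ℕ) : T K B q →ₗ[K] T K B (q + 1) :=
  (split K B q).symm.toLinearMap ∘ₗ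
    TensorProduct.map (prodT K B q) LinearMap.id ∘ₗ comulT K B q

/-- `τ^q : B^{⊗q} → B^{⊗(q+1)}`, `b¹⊗⋯⊗b^q ↦ b¹₍₁₎ ⊗ ⋯ ⊗ b^q₍₁₎ ⊗ (b¹₍₂₎⋯b^q₍₂₎)`. -/
noncomputable def tauMap (q : ℕ) : T K B q →ₗ[K] T K B (q + 1) :=
  (splitLast K B q).symm.toLinearMap ∘ₗ
    TensorProduct.map LinearMap.id (prodT K B q) ∘ₗ comulT K B q

/-- The horizontal (Hochschild-type) differential
`δ_h^{p,q} : Hom(B^{⊗q}, B^{⊗p}) → Hom(B^{⊗(q+1)}, B^{⊗p})`. -/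
noncomputable def deltaH (p q : ℕ) (f : T K B q →ₗ[K] T K B p) :
    T K B (q + 1) →ₗ[K] T K B p :=
  lamMap K B p ∘ₗ (split K B p).symm.toLinearMap ∘ₗ LinearMap.lTensor B f ∘ₗ
      (split K B q).toLinearMap
    + ∑ i ∈ Finset.range q, ((-1 : ℤ) ^ (i + 1)) • (f ∘ₗ mulAt K B q i)
    + ((-1 : ℤ) ^ (q + 1)) •
        (rhoMap K B p ∘ₗ (splitLast K B p).symm.toLinearMap ∘ₗ LinearMap.rTensor B f ∘ₗ
          (splitLast K B q).toLinearMap)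

/-- The vertical (coHochschild-type) differential
`δ_c^{p,q} : Hom(B^{⊗q}, B^{⊗p}) → Hom(B^{⊗q}, B^{⊗(p+1)})`. -/
noncomputable def deltaCv (p q : ℕ) (f : T K B q →ₗ[K] T K B p) :
    T K B q →ₗ[K] T K B (p + 1) :=
  (split K B p).symm.toLinearMap ∘ₗ LinearMap.lTensor B f ∘ₗ (split K B q).toLinearMap ∘ₗ
      sigmaMap K B q
    + ∑ j ∈ Finset.range p, ((-1 : ℤ) ^ (j + 1)) • (comulAt K B p j ∘ₗ f)
    + ((-1 : ℤ) ^ (p + 1)) •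
        ((splitLast K B p).symm.toLinearMap ∘ₗ LinearMap.rTensor B f ∘ₗ
          (splitLast K B q).toLinearMap ∘ₗ tauMap K B q)


/-!
Along the bilinear maps `B × B^{⊗p} → B^{⊗(p+1)}` and `B^{⊗p} × B → B^{⊗(p+1)}` which adjoin a
tensor factor, the outer terms of `δ_c` are convolution products of `f` with the multiplication map
`B^{⊗q} → B`. They are therefore the outer cofaces of a cosimplicial module: the cosimplicial
identities between them are associativity of convolution together with the fact that the
multiplication map is a morphism of coalgebras, and those involving some `Δ_j` follow by adjoining
one factor at a time. The alternating sum of the cofaces then squares to zero.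
-/

section Convolution

variable {R C M N P : Type*} [CommSemiring R] [AddCommMonoid C] [Module R C] [Coalgebra R C]
  [AddCommMonoid M] [Module R M] [AddCommMonoid N] [Module R N] [AddCommMonoid P] [Module R P]

theorem assoc_comp_map_map_comul (f : C →ₗ[R] M) (g : C →ₗ[R] N) (h : C →ₗ[R] P) :
    (TensorProduct.assoc R M N P).toLinearMap ∘ₗ
        map (map f g ∘ₗ Coalgebra.comul) h ∘ₗ Coalgebra.comul =
      map f (map g h ∘ₗ Coalgebra.comul) ∘ₗ Coalgebra.comul := by
  simp only [coassoc_simps]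

/-- Convolution along a bilinear map `β`: the linear map `c ↦ β (f c₍₁₎) (g c₍₂₎)`. -/
noncomputable def conv (β : M →ₗ[R] N →ₗ[R] P) :
    (C →ₗ[R] M) →ₗ[R] (C →ₗ[R] N) →ₗ[R] C →ₗ[R] P :=
  LinearMap.mk₂ R (fun f g ↦ lift β ∘ₗ map f g ∘ₗ Coalgebra.comul)
    (by simp [map_add_left, LinearMap.add_comp, LinearMap.comp_add])
    (by simp [map_smul_left, LinearMap.smul_comp, LinearMap.comp_smul])
    (by simp [map_add_right, LinearMap.add_comp, LinearMap.comp_add])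
    (by simp [map_smul_right, LinearMap.smul_comp, LinearMap.comp_smul])

theorem conv_def (β : M →ₗ[R] N →ₗ[R] P) (f : C →ₗ[R] M) (g : C →ₗ[R] N) :
    conv β f g = lift β ∘ₗ map f g ∘ₗ Coalgebra.comul :=
  rfl

variable {M' N' P' Q : Type*} [AddCommMonoid M'] [Module R M'] [AddCommMonoid N'] [Module R N']
  [AddCommMonoid P'] [Module R P'] [AddCommMonoid Q] [Module R Q]

theorem comp_conv {β : M →ₗ[R] N →ₗ[R] P} {β' : M' →ₗ[R] N' →ₗ[R] P'} {k : P →ₗ[R] P'}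
    {u : M →ₗ[R] M'} {v : N →ₗ[R] N'} (h : ∀ m n, k (β m n) = β' (u m) (v n))
    (f : C →ₗ[R] M) (g : C →ₗ[R] N) :
    k ∘ₗ conv β f g = conv β' (u ∘ₗ f) (v ∘ₗ g) := by
  have lift_comp : k ∘ₗ lift β = lift β' ∘ₗ map u v := TensorProduct.ext' h
  rw [conv_def, conv_def, ← LinearMap.comp_assoc, lift_comp, map_comp]
  rfl

theorem conv_assoc {β : M →ₗ[R] N →ₗ[R] P'} {γ : P' →ₗ[R] P →ₗ[R] Q} {β' : N →ₗ[R] P →ₗ[R] N'}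
    {γ' : M →ₗ[R] N' →ₗ[R] Q} (h : ∀ m n p, γ (β m n) p = γ' m (β' n p))
    (f : C →ₗ[R] M) (g : C →ₗ[R] N) (k : C →ₗ[R] P) :
    conv γ (conv β f g) k = conv γ' f (conv β' g k) := by
  have lift_assoc : lift γ ∘ₗ LinearMap.rTensor P (lift β) =
      lift γ' ∘ₗ LinearMap.lTensor M (lift β') ∘ₗ (TensorProduct.assoc R M N P).toLinearMap :=
    TensorProduct.ext_threefold h
  calc conv γ (conv β f g) k
      = (lift γ ∘ₗ LinearMap.rTensor P (lift β)) ∘ₗ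
          map (map f g ∘ₗ Coalgebra.comul) k ∘ₗ Coalgebra.comul := by
        simp only [conv_def, ← LinearMap.rTensor_comp_map, LinearMap.comp_assoc]
    _ = lift γ' ∘ₗ LinearMap.lTensor M (lift β') ∘ₗ
          map f (map g k ∘ₗ Coalgebra.comul) ∘ₗ Coalgebra.comul := by
        rw [lift_assoc, ← assoc_comp_map_map_comul]
        rfl
    _ = conv γ' f (conv β' g k) := by
        simp only [conv_def, ← LinearMap.lTensor_comp_map, LinearMap.comp_assoc]

variable {D : Type*} [AddCommMonoid D] [Module R D] [Coalgebra R D]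

theorem comul_comp_eq_conv (π : C →ₗc[R] D) :
    Coalgebra.comul ∘ₗ (π : C →ₗ[R] D) = conv (mk R D D) (π : C →ₗ[R] D) π := by
  rw [conv_def, lift_mk, LinearMap.id_comp, CoalgHomClass.map_comp_comul]

theorem comp_conv_eq_conv_conv_left {β : D →ₗ[R] N →ₗ[R] P} {β' : D →ₗ[R] P →ₗ[R] Q}
    {k : P →ₗ[R] Q} (h : ∀ d n, k (β d n) = conv β' .id (β.flip n) d)
    (π : C →ₗc[R] D) (f : C →ₗ[R] N) :
    k ∘ₗ conv β (π : C →ₗ[R] D) f = conv β' π (conv β π f) := by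
  let γ : D ⊗[R] D →ₗ[R] N →ₗ[R] Q :=
    curry (lift β' ∘ₗ LinearMap.lTensor D (lift β) ∘ₗ (TensorProduct.assoc R D D N).toLinearMap)
  have flip_γ (n : N) : lift β' ∘ₗ map .id (β.flip n) = γ.flip n := TensorProduct.ext' fun _ _ ↦ rfl
  have k_β (d : D) (n : N) : k (β d n) = γ (Coalgebra.comul d) n :=
    (h d n).trans (LinearMap.congr_fun (flip_γ n) (Coalgebra.comul d))
  calc k ∘ₗ conv β (π : C →ₗ[R] D) f
      = conv γ (Coalgebra.comul ∘ₗ (π : C →ₗ[R] D)) f := comp_conv (v := .id) k_β _ f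
    _ = conv β' π (conv β π f) := by
        rw [comul_comp_eq_conv]
        exact conv_assoc (fun _ _ _ ↦ rfl) _ _ f

theorem comp_conv_eq_conv_conv_right {β : N →ₗ[R] D →ₗ[R] P} {β' : P →ₗ[R] D →ₗ[R] Q}
    {k : P →ₗ[R] Q} (h : ∀ n d, k (β n d) = conv β' (β n) .id d)
    (f : C →ₗ[R] N) (π : C →ₗc[R] D) :
    k ∘ₗ conv β f (π : C →ₗ[R] D) = conv β' (conv β f π) π := by
  let γ : N →ₗ[R] D ⊗[R] D →ₗ[R] Q :=
    curry (lift β' ∘ₗ LinearMap.rTensor D (lift β) ∘ₗ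
      (TensorProduct.assoc R N D D).symm.toLinearMap)
  have γ_apply (n : N) : lift β' ∘ₗ map (β n) .id = γ n := TensorProduct.ext' fun _ _ ↦ rfl
  have k_β (n : N) (d : D) : k (β n d) = γ n (Coalgebra.comul d) :=
    (h n d).trans (LinearMap.congr_fun (γ_apply n) (Coalgebra.comul d))
  calc k ∘ₗ conv β f (π : C →ₗ[R] D)
      = conv γ f (Coalgebra.comul ∘ₗ (π : C →ₗ[R] D)) := comp_conv (u := .id) k_β f _
    _ = conv β' (conv β f π) π := by
        rw [comul_comp_eq_conv]
        exact (conv_assoc (fun _ _ _ ↦ rfl) f _ _).symm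

end Convolution

section Transport

variable {R C D : Type*} [CommSemiring R] [AddCommMonoid C] [Module R C] [Coalgebra R C]
  [AddCommMonoid D] [Module R D]

/-- Transport of a comultiplication and a counit along a linear equivalence. -/
noncomputable abbrev coalgebraStructOfLinearEquiv (e : D ≃ₗ[R] C) : CoalgebraStruct R D where
  comul := map e.symm.toLinearMap e.symm.toLinearMap ∘ₗ Coalgebra.comul ∘ₗ e.toLinearMap
  counit := Coalgebra.counit ∘ₗ e.toLinearMap

/-- A linear equivalence, as an equivalence from the coalgebra structure transported along it. -/
noncomputable def coalgEquivOfLinearEquiv (e : D ≃ₗ[R] C) :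
    letI := coalgebraStructOfLinearEquiv e
    D ≃ₗc[R] C :=
  letI := coalgebraStructOfLinearEquiv e
  { e with
    counit_comp := rfl
    map_comp_comul := by
      change map _ _ ∘ₗ map _ _ ∘ₗ _ = _
      simp [← LinearMap.comp_assoc, ← map_comp] }

/-- Transport of a coalgebra structure along a linear equivalence. -/
noncomputable abbrev coalgebraOfLinearEquiv (e : D ≃ₗ[R] C) : Coalgebra R D :=
  letI := coalgebraStructOfLinearEquiv e
  (coalgEquivOfLinearEquiv e).symm.toCoalgebra

end Transport

section TensorPowers

variable {K B}

/-- `b ⊗ t ∈ B^{⊗(n+1)}` for `b ∈ B` and `t ∈ B^{⊗n}`. -/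
noncomputable def cons {n : ℕ} : B →ₗ[K] T K B n →ₗ[K] T K B (n + 1) :=
  (mk K B (T K B n)).compr₂ (split K B n).symm.toLinearMap

/-- `t ⊗ b ∈ B^{⊗(n+1)}` for `t ∈ B^{⊗n}` and `b ∈ B`. -/
noncomputable def snoc {n : ℕ} : T K B n →ₗ[K] B →ₗ[K] T K B (n + 1) :=
  (mk K (T K B n) B).compr₂ (splitLast K B n).symm.toLinearMap

theorem split_tprod {n : ℕ} (x : Fin (n + 1) → B) :
    split K B n (PiTensorProduct.tprod K x) =
      x 0 ⊗ₜ PiTensorProduct.tprod K (Fin.tail x) := by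
  simp only [split, finCongr_symm, LinearEquiv.trans_apply, PiTensorProduct.reindex_tprod,
    Equiv.symm_trans, Equiv.symm_symm, Equiv.trans_apply, finCongr_apply,
    PiTensorProduct.tmulEquiv_symm_apply, finSumFinEquiv_apply_left, finSumFinEquiv_apply_right,
    Fin.cast_natAdd, Fin.addNat_one, congr_tmul, PiTensorProduct.subsingletonEquiv_apply_tprod,
    LinearEquiv.refl_apply]
  rfl

theorem splitLast_tprod {n : ℕ} (x : Fin (n + 1) → B) :
    splitLast K B n (PiTensorProduct.tprod K x) =
      PiTensorProduct.tprod K (Fin.init x) ⊗ₜ x (Fin.last n) := by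
  simp only [splitLast, LinearEquiv.trans_apply, PiTensorProduct.reindex_tprod, Equiv.symm_symm,
    PiTensorProduct.tmulEquiv_symm_apply, finSumFinEquiv_apply_left, finSumFinEquiv_apply_right,
    congr_tmul, LinearEquiv.refl_apply, PiTensorProduct.subsingletonEquiv_apply_tprod]
  rfl

theorem lift_cons (n : ℕ) :
    lift cons = (split K B n).symm.toLinearMap :=
  TensorProduct.ext' fun _ _ ↦ rfl

theorem lift_snoc (n : ℕ) :
    lift snoc = (splitLast K B n).symm.toLinearMap :=
  TensorProduct.ext' fun _ _ ↦ rfl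

theorem cons_tprod {n : ℕ} (b : B) (x : Fin n → B) :
    cons b (PiTensorProduct.tprod K x) =
      PiTensorProduct.tprod K (Fin.cons b x : Fin (n + 1) → B) :=
  (LinearEquiv.symm_apply_eq _).2 (by rw [split_tprod, Fin.cons_zero, Fin.tail_cons]; rfl)

theorem snoc_tprod {n : ℕ} (x : Fin n → B) (b : B) :
    snoc (PiTensorProduct.tprod K x) b =
      PiTensorProduct.tprod K (Fin.snoc x b : Fin (n + 1) → B) :=
  (LinearEquiv.symm_apply_eq _).2 (by rw [splitLast_tprod, Fin.init_snoc, Fin.snoc_last]; rfl)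

theorem hom_ext_cons {n : ℕ} {M : Type*} [AddCommMonoid M] [Module K M]
    {f g : T K B (n + 1) →ₗ[K] M} (h : ∀ b t, f (cons b t) = g (cons b t)) : f = g :=
  (LinearMap.cancel_right (split K B n).symm.surjective).1 (TensorProduct.ext' h)

theorem cons_snoc {n : ℕ} (b : B) (t : T K B n) (c : B) :
    cons b (snoc t c) = snoc (cons b t) c := by
  suffices cons b ∘ₗ snoc.flip c = snoc.flip c ∘ₗ cons (n := n) b from LinearMap.congr_fun this t
  ext x
  simp [cons_tprod, snoc_tprod, Fin.cons_snoc_eq_snoc_cons]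

theorem snoc_eq_cons (t : T K B 0) (c : B) : snoc t c = cons c t := by
  suffices snoc.flip c = cons (n := 0) c from LinearMap.congr_fun this t
  ext x
  simp only [LinearMap.compMultilinearMap_apply, LinearMap.flip_apply, cons_tprod, snoc_tprod]
  congr 1
  ext i
  rw [Fin.eq_zero i]
  rfl

theorem prodT_cons {n : ℕ} (b : B) (t : T K B n) :
    prodT K B (n + 1) (cons b t) = b * prodT K B n t := by
  suffices prodT K B (n + 1) ∘ₗ cons b = LinearMap.mulLeft K b ∘ₗ prodT K B n from
    LinearMap.congr_fun this t
  ext x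
  simp [prodT, cons_tprod]

theorem comulAt_succ_cons {p : ℕ} (i : ℕ) (b : B) (t : T K B p) :
    comulAt K B (p + 1) (i + 1) (cons b t) = cons b (comulAt K B p i t) := by
  simp [comulAt, cons]

theorem comulAt_zero_cons {p : ℕ} (b : B) (t : T K B p) :
    comulAt K B (p + 1) 0 (cons b t) = conv cons .id (cons.flip t) b := by
  let assocSplit := LinearMap.lTensor B (split K B p).symm.toLinearMap ∘ₗ
    (TensorProduct.assoc K B B (T K B p)).toLinearMap
  have : assocSplit ∘ₗ (mk K (B ⊗[K] B) (T K B p)).flip t = map .id (cons.flip t) :=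
    TensorProduct.ext' fun _ _ ↦ rfl
  calc comulAt K B (p + 1) 0 (cons b t)
      = (split K B (p + 1)).symm (assocSplit (Coalgebra.comul b ⊗ₜ t)) := by
        simp [comulAt, cons, assocSplit]
    _ = (split K B (p + 1)).symm (map .id (cons.flip t) (Coalgebra.comul b)) :=
        congrArg _ (LinearMap.congr_fun this _)
    _ = conv cons .id (cons.flip t) b := by
        rw [conv_def, lift_cons]
        rfl

theorem comulAt_snoc {p i : ℕ} (hi : i < p) (t : T K B p) (c : B) :
    comulAt K B (p + 1) i (snoc t c) = snoc (comulAt K B p i t) c := by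
  induction p generalizing i with
  | zero => exact absurd hi i.not_lt_zero
  | succ p ih =>
    suffices comulAt K B (p + 2) i ∘ₗ snoc.flip c = snoc.flip c ∘ₗ comulAt K B (p + 1) i from
      LinearMap.congr_fun this t
    refine hom_ext_cons fun b s ↦ ?_
    simp only [LinearMap.comp_apply, LinearMap.flip_apply, ← cons_snoc]
    cases i with
    | zero =>
      have snoc_conv : snoc.flip c ∘ₗ conv cons .id (cons.flip s) =
          conv cons .id (snoc.flip c ∘ₗ cons.flip s) :=
        comp_conv (u := .id) (fun a t ↦ (cons_snoc a t c).symm) _ _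
      have cons_comm : cons.flip (snoc s c) = snoc.flip c ∘ₗ cons.flip s :=
        LinearMap.ext fun b ↦ cons_snoc b s c
      rw [comulAt_zero_cons, comulAt_zero_cons, cons_comm, ← snoc_conv]
      rfl
    | succ i =>
      rw [comulAt_succ_cons, comulAt_succ_cons, ih (Nat.lt_of_succ_lt_succ hi), cons_snoc]

theorem conv_cons_flip_cons_eq_conv_snoc_snoc (t : T K B 0) :
    conv cons .id (cons.flip t) = conv (C := B) snoc (snoc t) .id := by
  have lift_eq : lift cons ∘ₗ map .id (cons.flip t) = lift snoc ∘ₗ map (snoc t) .id :=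
    TensorProduct.ext' fun b c ↦
      calc cons b (cons c t) = cons b (snoc t c) := by rw [snoc_eq_cons]
        _ = snoc (cons b t) c := cons_snoc b t c
        _ = snoc (snoc t b) c := by rw [snoc_eq_cons]
  exact congrArg (· ∘ₗ Coalgebra.comul) lift_eq

theorem comulAt_last_snoc {p : ℕ} (t : T K B p) (c : B) :
    comulAt K B (p + 1) p (snoc t c) = conv snoc (snoc t) .id c := by
  induction p with
  | zero => rw [snoc_eq_cons, comulAt_zero_cons, conv_cons_flip_cons_eq_conv_snoc_snoc]
  | succ p ih =>
    suffices comulAt K B (p + 2) (p + 1) ∘ₗ snoc.flip c =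
        ((conv snoc).flip .id ∘ₗ snoc).flip c from LinearMap.congr_fun this t
    refine hom_ext_cons fun b s ↦ ?_
    have snoc_cons : snoc (cons b s) = cons b ∘ₗ snoc s :=
      LinearMap.ext fun c ↦ (cons_snoc b s c).symm
    have cons_conv : cons b ∘ₗ conv snoc (snoc s) .id = conv snoc (snoc (cons b s)) .id := by
      rw [snoc_cons]
      exact comp_conv (v := .id) (cons_snoc b) _ _
    calc comulAt K B (p + 2) (p + 1) (snoc (cons b s) c)
        = cons b (comulAt K B (p + 1) p (snoc s c)) := by rw [← cons_snoc, comulAt_succ_cons]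
      _ = (cons b ∘ₗ conv snoc (snoc s) .id) c := by rw [ih]; rfl
      _ = conv snoc (snoc (cons b s)) .id c := by rw [cons_conv]

theorem comulAt_succ_comulAt_zero_cons {p : ℕ} (j : ℕ) (b : B) (t : T K B p) :
    comulAt K B (p + 2) (j + 1) (comulAt K B (p + 1) 0 (cons b t)) =
      conv cons .id (comulAt K B (p + 1) j ∘ₗ cons.flip t) b := by
  rw [comulAt_zero_cons]
  exact LinearMap.congr_fun (comp_conv (u := .id) (comulAt_succ_cons j) .id (cons.flip t)) b

theorem comulAt_comulAt {p i j : ℕ} (hij : i ≤ j) (t : T K B p) :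
    comulAt K B (p + 1) (j + 1) (comulAt K B p i t) =
      comulAt K B (p + 1) i (comulAt K B p j t) := by
  induction p generalizing i j with
  | zero => simp [comulAt]
  | succ p ih =>
    suffices comulAt K B (p + 2) (j + 1) ∘ₗ comulAt K B (p + 1) i =
        comulAt K B (p + 2) i ∘ₗ comulAt K B (p + 1) j from LinearMap.congr_fun this t
    refine hom_ext_cons fun b s ↦ ?_
    simp only [LinearMap.comp_apply]
    match i, j, hij with
    | 0, 0, _ =>
      have flip_cons : comulAt K B (p + 1) 0 ∘ₗ cons.flip s = conv cons .id (cons.flip s) :=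
        LinearMap.ext fun b ↦ comulAt_zero_cons b s
      rw [comulAt_succ_comulAt_zero_cons, comulAt_zero_cons b, flip_cons]
      exact LinearMap.congr_fun
        (comp_conv_eq_conv_conv_left comulAt_zero_cons (.id K B) (cons.flip s)).symm b
    | 0, j + 1, _ =>
      have flip_cons : comulAt K B (p + 1) (j + 1) ∘ₗ cons.flip s =
          cons.flip (comulAt K B p j s) := LinearMap.ext fun b ↦ comulAt_succ_cons j b s
      rw [comulAt_succ_comulAt_zero_cons, flip_cons, comulAt_succ_cons, comulAt_zero_cons]
    | i + 1, j + 1, hij =>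
      simp only [comulAt_succ_cons, ih (Nat.le_of_succ_le_succ hij)]

end TensorPowers

section TensorCoalgebra

variable {K B}

/-- The tensor product coalgebra structure on `B^{⊗n}`. -/
noncomputable instance tensorPowerCoalgebra : (n : ℕ) → Coalgebra K (T K B n)
  | 0 => coalgebraOfLinearEquiv (PiTensorProduct.isEmptyEquiv (Fin 0))
  | n + 1 => letI := tensorPowerCoalgebra n; coalgebraOfLinearEquiv (split K B n)

theorem comul_eq_comulT (n : ℕ) :
    Coalgebra.comul (R := K) (A := T K B n) = comulT K B n := by
  induction n with
  | zero => rfl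
  | succ n ih => rw [comulT, ← ih]; rfl

variable (K B) in
/-- The product map `b¹ ⊗ ⋯ ⊗ bⁿ ↦ b¹⋯bⁿ` as a morphism of coalgebras. -/
noncomputable def prodCoalgHom : (n : ℕ) → T K B n →ₗc[K] B
  | 0 => (Bialgebra.unitBialgHom K B : K →ₗc[K] B).comp
      (coalgEquivOfLinearEquiv (PiTensorProduct.isEmptyEquiv (Fin 0))).toCoalgHom
  | n + 1 => (Bialgebra.mulCoalgHom K B).comp <|
      (Coalgebra.TensorProduct.map (.id K B) (prodCoalgHom n)).comp
        (coalgEquivOfLinearEquiv (split K B n)).toCoalgHom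

theorem coe_prodCoalgHom (n : ℕ) : (prodCoalgHom K B n : T K B n →ₗ[K] B) = prodT K B n := by
  induction n with
  | zero =>
    ext x
    calc prodCoalgHom K B 0 (PiTensorProduct.tprod K x)
      _ = algebraMap K B (PiTensorProduct.isEmptyEquiv (Fin 0) (PiTensorProduct.tprod K x)) := rfl
      _ = prodT K B 0 (PiTensorProduct.tprod K x) := by simp [prodT]
  | succ n ih =>
    refine hom_ext_cons fun b t ↦ ?_
    calc prodCoalgHom K B (n + 1) (cons b t)
      _ = LinearMap.mul' K B
            (map .id (prodCoalgHom K B n : T K B n →ₗ[K] B) (split K B n (cons b t))) := rfl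
      _ = prodT K B (n + 1) (cons b t) := by
        rw [ih, prodT_cons]
        simp [cons]

end TensorCoalgebra

section Cofaces

variable {K B} {C : Type*} [AddCommMonoid C] [Module K C] [Coalgebra K C] {p : ℕ}

/-- The `i`-th coface `Hom(C, B^{⊗p}) → Hom(C, B^{⊗(p+1)})` of the coHochschild complex of a
coalgebra `C` over `π : C → B`. The indices `0 < i ≤ p` comultiply the `i`-th tensor factor, and
every `i > p` gives the last coface. -/
noncomputable def coface (π : C →ₗ[K] B) (p : ℕ) :
    ℕ → (C →ₗ[K] T K B p) →ₗ[K] C →ₗ[K] T K B (p + 1)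
  | 0 => conv cons π
  | i + 1 => if i < p then LinearMap.compRight K (comulAt K B p i) else (conv snoc).flip π

theorem coface_zero (π : C →ₗ[K] B) (f : C →ₗ[K] T K B p) : coface π p 0 f = conv cons π f :=
  rfl

theorem coface_succ {i : ℕ} (hi : i < p) (π : C →ₗ[K] B) (f : C →ₗ[K] T K B p) :
    coface π p (i + 1) f = comulAt K B p i ∘ₗ f := by
  simp [coface, hi]

theorem coface_last (π : C →ₗ[K] B) (f : C →ₗ[K] T K B p) :
    coface π p (p + 1) f = conv snoc f π := by
  simp [coface]

theorem coface_coface_zero {j : ℕ} (hj : j ≤ p + 1) (π : C →ₗc[K] B) (f : C →ₗ[K] T K B p) :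
    coface (π : C →ₗ[K] B) (p + 1) (j + 1) (coface π p 0 f) =
      coface π (p + 1) 0 (coface π p j f) := by
  rcases j with _ | j
  · rw [coface_succ p.succ_pos]
    exact comp_conv_eq_conv_conv_left comulAt_zero_cons π f
  obtain hj | rfl := (Nat.le_of_succ_le_succ hj).lt_or_eq
  · rw [coface_succ (Nat.succ_lt_succ hj), coface_succ hj]
    exact comp_conv (u := .id) (comulAt_succ_cons j) _ f
  · rw [coface_last, coface_last]
    exact conv_assoc (fun b t c ↦ (cons_snoc b t c).symm) _ f _

theorem coface_last_coface_succ {i : ℕ} (hi : i ≤ p) (π : C →ₗc[K] B) (f : C →ₗ[K] T K B p) :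
    coface (π : C →ₗ[K] B) (p + 1) (p + 2) (coface π p (i + 1) f) =
      coface π (p + 1) (i + 1) (coface π p (p + 1) f) := by
  rw [coface_last, coface_last, coface_succ (Nat.lt_succ_of_le hi)]
  obtain hi | rfl := hi.lt_or_eq
  · rw [coface_succ hi]
    exact (comp_conv (v := .id) (comulAt_snoc hi) f _).symm
  · rw [coface_last]
    exact (comp_conv_eq_conv_conv_right comulAt_last_snoc f π).symm

theorem coface_coface {i j : ℕ} (hij : i ≤ j) (hj : j ≤ p + 1) (π : C →ₗc[K] B)
    (f : C →ₗ[K] T K B p) :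
    coface (π : C →ₗ[K] B) (p + 1) (j + 1) (coface π p i f) =
      coface π (p + 1) i (coface π p j f) := by
  match i, j, hij with
  | 0, j, _ => exact coface_coface_zero hj π f
  | i + 1, j + 1, hij =>
    have hij : i ≤ j := Nat.le_of_succ_le_succ hij
    obtain hj | rfl := (Nat.le_of_succ_le_succ hj).lt_or_eq
    · have hi : i < p := hij.trans_lt hj
      rw [coface_succ (Nat.succ_lt_succ hj), coface_succ hi, coface_succ (hi.trans p.lt_succ_self),
        coface_succ hj]
      exact LinearMap.ext fun c ↦ comulAt_comulAt hij (f c)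
    · exact coface_last_coface_succ hij π f

end Cofaces

section AlternatingSum

theorem sum_sum_alternating_eq_zero {A : Type*} [AddCommGroup A] (a : ℕ → ℕ → A) (n : ℕ)
    (ha : ∀ i j, i ≤ j → j < n → a (j + 1) i = a i j) :
    ∑ j ∈ Finset.range (n + 1), ∑ i ∈ Finset.range n, (-1 : ℤ) ^ (j + i) • a j i = 0 := by
  induction n with
  | zero => simp
  | succ n ih =>
    have ih : ∑ j ∈ Finset.range (n + 1), ∑ i ∈ Finset.range n, (-1 : ℤ) ^ (j + i) • a j i = 0 :=
      ih fun i j hij hj ↦ ha i j hij (hj.trans n.lt_succ_self)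
    have last_row : ∑ i ∈ Finset.range (n + 1), (-1 : ℤ) ^ (n + 1 + i) • a (n + 1) i =
        -∑ j ∈ Finset.range (n + 1), (-1 : ℤ) ^ (j + n) • a j n := by
      rw [← Finset.sum_neg_distrib]
      refine Finset.sum_congr rfl fun i hi ↦ ?_
      rw [ha i n (Nat.lt_succ_iff.1 (Finset.mem_range.1 hi)) n.lt_succ_self, ← neg_smul]
      congr 1
      ring
    rw [Finset.sum_range_succ, last_row]
    simp only [Finset.sum_range_succ _ n, Finset.sum_add_distrib] at ih ⊢
    exact Eq.trans (by abel) ih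

theorem alternatingSum_comp_alternatingSum {R M N P : Type*} [Ring R] [AddCommGroup M] [Module R M]
    [AddCommGroup N] [Module R N] [AddCommGroup P] [Module R P] (n : ℕ)
    {d : ℕ → M →ₗ[R] N} {d' : ℕ → N →ₗ[R] P}
    (h : ∀ i j, i ≤ j → j < n → d' (j + 1) ∘ₗ d i = d' i ∘ₗ d j) :
    (∑ j ∈ Finset.range (n + 1), (-1 : ℤ) ^ j • d' j) ∘ₗ
      (∑ i ∈ Finset.range n, (-1 : ℤ) ^ i • d i) = 0 := by
  rw [← sum_sum_alternating_eq_zero (fun j i ↦ d' j ∘ₗ d i) n h]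
  ext m
  simp [smul_smul, pow_add, Finset.smul_sum]

end AlternatingSum

section CoHochschild

variable {K B} {C : Type*} [AddCommMonoid C] [Module K C] [Coalgebra K C]

/-- The coHochschild differential `Hom(C, B^{⊗p}) → Hom(C, B^{⊗(p+1)})`, for a coalgebra `C`
over `π : C → B`: the alternating sum of the cofaces. -/
noncomputable def coHochschild (π : C →ₗ[K] B) (p : ℕ) :
    (C →ₗ[K] T K B p) →ₗ[K] C →ₗ[K] T K B (p + 1) :=
  ∑ i ∈ Finset.range (p + 2), (-1 : ℤ) ^ i • coface π p i

theorem coHochschild_apply (π : C →ₗ[K] B) (p : ℕ) (f : C →ₗ[K] T K B p) :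
    coHochschild π p f = ∑ i ∈ Finset.range (p + 2), (-1 : ℤ) ^ i • coface π p i f := by
  rw [coHochschild, LinearMap.sum_apply]
  rfl

theorem deltaCv_deltaCv_general (π : C →ₗc[K] B) (p : ℕ) (f : C →ₗ[K] T K B p) :
    coHochschild (π : C →ₗ[K] B) (p + 1) (coHochschild π p f) = 0 :=
  LinearMap.congr_fun (alternatingSum_comp_alternatingSum (p + 2) fun _ _ hij hj ↦
    LinearMap.ext (coface_coface hij (Nat.lt_succ_iff.1 hj) π)) f

theorem deltaCv_eq_coHochschild (p q : ℕ) (f : T K B q →ₗ[K] T K B p) :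
    deltaCv K B p q f = coHochschild (prodCoalgHom K B q : T K B q →ₗ[K] B) p f := by
  rw [coe_prodCoalgHom]
  have split_sigma : (split K B q).toLinearMap ∘ₗ sigmaMap K B q =
      map (prodT K B q) .id ∘ₗ comulT K B q := by
    rw [sigmaMap, ← LinearMap.comp_assoc, LinearEquiv.comp_symm, LinearMap.id_comp]
  have splitLast_tau : (splitLast K B q).toLinearMap ∘ₗ tauMap K B q =
      map .id (prodT K B q) ∘ₗ comulT K B q := by
    rw [tauMap, ← LinearMap.comp_assoc, LinearEquiv.comp_symm, LinearMap.id_comp]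
  have first : (split K B p).symm.toLinearMap ∘ₗ LinearMap.lTensor B f ∘ₗ
      (split K B q).toLinearMap ∘ₗ sigmaMap K B q = coface (prodT K B q) p 0 f := by
    rw [coface_zero, conv_def, lift_cons, comul_eq_comulT, split_sigma,
      ← LinearMap.comp_assoc (comulT K B q), LinearMap.lTensor_comp_map, LinearMap.comp_id]
  have last : (splitLast K B p).symm.toLinearMap ∘ₗ LinearMap.rTensor B f ∘ₗ
      (splitLast K B q).toLinearMap ∘ₗ tauMap K B q = coface (prodT K B q) p (p + 1) f := by
    rw [coface_last, conv_def, lift_snoc, comul_eq_comulT, splitLast_tau,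
      ← LinearMap.comp_assoc (comulT K B q), LinearMap.rTensor_comp_map, LinearMap.comp_id]
  have middle : ∑ j ∈ Finset.range p, (-1 : ℤ) ^ (j + 1) • (comulAt K B p j ∘ₗ f) =
      ∑ j ∈ Finset.range p, (-1 : ℤ) ^ (j + 1) • coface (prodT K B q) p (j + 1) f :=
    Finset.sum_congr rfl fun j hj ↦ by rw [coface_succ (Finset.mem_range.1 hj)]
  rw [deltaCv, first, middle, last, coHochschild_apply, Finset.sum_range_succ,
    Finset.sum_range_succ', pow_zero, one_smul, add_comm (Finset.sum _ _)]

end CoHochschild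

/-- For all `p, q ≥ 1`, the vertical differentials of the
Gerstenhaber–Schack bicomplex satisfy `δ_c^{p+1,q} ∘ δ_c^{p,q} = 0`. -/
theorem deltaCv_deltaCv (p q : ℕ) (hp : 1 ≤ p) (hq : 1 ≤ q)
    (f : T K B q →ₗ[K] T K B p) :
    deltaCv K B (p + 1) q (deltaCv K B p q f) = 0 := by
  rw [deltaCv_eq_coHochschild, deltaCv_eq_coHochschild, deltaCv_deltaCv_general]

end GBD
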